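/- arXiv:1803.05893 — 2 statements merged into one kernel-verified Lean document; each statement's English description precedes it below -/
import Mathlib

section
/- For a terrain T with altitude line A at height h and any fixed point q ∈ T, the set of altitude positions that see q, namely {p ∈ A : p sees q}, is a convex subset of ℝ × ℝ (an interval of A). -/
open Set

/-- The terrain: union of the closed segments `[v i, v (i+1)]`, `i = 0, …, n-2`. -/
def terrain (n : ℕ) (hn : 2 ≤ n) (v : Fin n → ℝ × ℝ) : Set (ℝ × ℝ) :=
  ⋃ i : Fin (n - 1), segment ℝ (v (Fin.castLE (by omega) i)) (v (Fin.cast (by omega) i.succ))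

/-- A point `r` is on or above the terrain `T`. -/
def onAbove (T : Set (ℝ × ℝ)) (r : ℝ × ℝ) : Prop :=
  ∀ t ∈ T, t.1 = r.1 → t.2 ≤ r.2

/-- `p` sees `q` (w.r.t. terrain `T`): every point of the segment `[p,q]` is on or above `T`. -/
def seesT (T : Set (ℝ × ℝ)) (p q : ℝ × ℝ) : Prop :=
  ∀ x ∈ segment ℝ p q, onAbove T x

/-- The altitude line at height `h`: the segment from `((v 0).1, h)` to `((v (n-1)).1, h)`. -/
def altLine (n : ℕ) (hn : 2 ≤ n) (v : Fin n → ℝ × ℝ) (h : ℝ) : Set (ℝ × ℝ) :=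
  segment ℝ ((v ⟨0, by omega⟩).1, h) ((v ⟨n - 1, by omega⟩).1, h)

/-!
Visibility of `q` is inherited by points closer to `q` on a line of sight, and by points vertically
above. Let an observer move along the graph of a concave function passing above `q`: a line of sight
to `q` then stays below the graph, so following it towards `q` and rising back to the graph shows
that the visible positions are star-shaped about the abscissa of `q`. On the real line, star-shaped
sets are convex.
-/

theorem convex_of_starConvex {𝕜 : Type*} [Field 𝕜] [LinearOrder 𝕜] [IsStrictOrderedRing 𝕜]
    {c : 𝕜} {s : Set 𝕜} (hs : StarConvex 𝕜 c s) : Convex 𝕜 s := by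
  rcases s.eq_empty_or_nonempty with rfl | hne
  · exact convex_empty
  · exact (hs.ordConnected (hs.mem hne)).convex

section Visibility

variable {T : Set (ℝ × ℝ)} {p p' q r r' : ℝ × ℝ}

theorem onAbove.mono (hr : onAbove T r) (hfst : r.1 = r'.1) (hsnd : r.2 ≤ r'.2) :
    onAbove T r' :=
  fun t ht htr => (hr t ht (htr.trans hfst.symm)).trans hsnd

theorem seesT.mono_left (hp : seesT T p q) (hfst : p.1 = p'.1) (hsnd : p.2 ≤ p'.2) :
    seesT T p' q := by
  rintro _ ⟨a, b, ha, hb, hab, rfl⟩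
  refine (hp (a • p + b • q) ⟨a, b, ha, hb, hab, rfl⟩).mono ?_ ?_
  · simp [hfst]
  · simpa using mul_le_mul_of_nonneg_left hsnd ha

theorem starConvex_setOf_seesT : StarConvex ℝ q {p | seesT T p q} := by
  refine starConvex_iff_segment_subset.2 fun p hp r hr x hx => hp x ?_
  rw [segment_symm] at hr
  exact (convex_segment p q).segment_subset hr (right_mem_segment ℝ p q) hx

variable {s : Set ℝ} {f : ℝ → ℝ}

theorem starConvex_setOf_seesT_graph (hf : ConcaveOn ℝ s f) (hqs : q.1 ∈ s) (hq : q.2 ≤ f q.1) :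
    StarConvex ℝ q.1 {x ∈ s | seesT T (x, f x) q} := by
  rintro x ⟨hxs, hx⟩ a b ha hb hab
  obtain ⟨hrs, hrf⟩ : (a • q + b • (x, f x)) ∈ {r : ℝ × ℝ | r.1 ∈ s ∧ r.2 ≤ f r.1} :=
    hf.convex_hypograph ⟨hqs, hq⟩ ⟨hxs, le_rfl⟩ ha hb hab
  have hr : seesT T (a • q + b • (x, f x)) q := starConvex_setOf_seesT hx ha hb hab
  exact ⟨hrs, hr.mono_left rfl hrf⟩

theorem convex_setOf_seesT_graph (hf : ConcaveOn ℝ s f) (hqs : q.1 ∈ s) (hq : q.2 ≤ f q.1) :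
    Convex ℝ {x ∈ s | seesT T (x, f x) q} :=
  convex_of_starConvex (starConvex_setOf_seesT_graph hf hqs hq)

end Visibility

section Terrain

variable {n : ℕ} {hn : 2 ≤ n} {v : Fin n → ℝ × ℝ}

theorem terrain_subset_of_convex {C : Set (ℝ × ℝ)} (hC : Convex ℝ C) (hv : ∀ i, v i ∈ C) :
    terrain n hn v ⊆ C :=
  iUnion_subset fun _ => hC.segment_subset (hv _) (hv _)

theorem snd_le_of_mem_terrain {h : ℝ} (hv : ∀ i, (v i).2 ≤ h) {q : ℝ × ℝ}
    (hq : q ∈ terrain n hn v) : q.2 ≤ h :=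
  terrain_subset_of_convex ((convex_Iic h).linear_preimage (LinearMap.snd ℝ ℝ ℝ)) hv hq

theorem snd_eq_of_mem_altLine {h : ℝ} {p : ℝ × ℝ} (hp : p ∈ altLine n hn v h) : p.2 = h := by
  simpa using (Prod.segment_subset _ _ hp).2

end Terrain

theorem stmt_6_general {T A : Set (ℝ × ℝ)} {f : ℝ →ᵃ[ℝ] ℝ} {q : ℝ × ℝ} (hA : Convex ℝ A)
    (hAf : ∀ p ∈ A, p.2 = f p.1) (hq : q.2 ≤ f q.1) :
    Convex ℝ {p ∈ A | seesT T p q} := by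
  have hf : ConcaveOn ℝ univ f := (concaveOn_id convex_univ).comp_affineMap f
  have hgraph : Convex ℝ {x ∈ univ | seesT T (x, f x) q} :=
    convex_setOf_seesT_graph hf (mem_univ _) hq
  convert hA.inter (hgraph.linear_preimage (LinearMap.fst ℝ ℝ ℝ)) using 1
  ext p
  refine and_congr_right fun hp => ?_
  simp [← hAf p hp]

theorem stmt_6 (n : ℕ) (hn : 2 ≤ n) (v : Fin n → ℝ × ℝ)
    (hmono : ∀ i j : Fin n, i < j → (v i).1 < (v j).1)
    (h : ℝ) (hh : ∀ i : Fin n, (v i).2 < h)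
    (q : ℝ × ℝ) (hq : q ∈ terrain n hn v) :
    Convex ℝ {p ∈ altLine n hn v h | seesT (terrain n hn v) p q} :=
  stmt_6_general (f := AffineMap.const ℝ ℝ h) (convex_segment _ _)
    (fun _ => snd_eq_of_mem_altLine) (snd_le_of_mem_terrain (fun i => (hh i).le) hq)
end

section
/- (Monotone mountains are perfect) For every monotone mountain P, the minimum cardinality of a guard cover equals the maximum cardinality of a witness set: there exists m ∈ ℕ such that m is the least element of {k : ∃ finite guard cover G ⊆ P with Set.ncard G = k} and m is the greatest element of {k : ∃ finite witness set W ⊆ P with Set.ncard W = k}. -/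
open Set

/-- The lower chain: union of the closed segments `[v i, v (i+1)]`, `i = 0, …, n-2`. -/
def lowerChain (n : ℕ) (hn : 2 ≤ n) (v : Fin n → ℝ × ℝ) : Set (ℝ × ℝ) :=
  ⋃ i : Fin (n - 1), segment ℝ (v (Fin.castLE (by omega) i)) (v (Fin.cast (by omega) i.succ))

/-- The monotone mountain determined by the lower chain and the affine top function `ℓ`. -/
def monoMountain (n : ℕ) (hn : 2 ≤ n) (v : Fin n → ℝ × ℝ) (ℓ : ℝ → ℝ) : Set (ℝ × ℝ) :=
  {p : ℝ × ℝ | (v ⟨0, by omega⟩).1 ≤ p.1 ∧ p.1 ≤ (v ⟨n - 1, by omega⟩).1 ∧ p.2 ≤ ℓ p.1 ∧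
    ∀ t ∈ lowerChain n hn v, t.1 = p.1 → t.2 ≤ p.2}

/-- `p` sees `q` within `S`: the closed segment `[p,q]` is contained in `S`. -/
def seesIn (S : Set (ℝ × ℝ)) (p q : ℝ × ℝ) : Prop := segment ℝ p q ⊆ S

/-- Visibility polygon of `p` within `S`. -/
def visIn (S : Set (ℝ × ℝ)) (p : ℝ × ℝ) : Set (ℝ × ℝ) := {q | q ∈ S ∧ seesIn S p q}

/-!
Lifting the far end of a sight line vertically to the roof keeps the sight line inside the mountain,
because the roof is concave. Hence guards on the roof suffice, and a roof guard sees `p` exactly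
when its abscissa lies in the *shadow* of `p`, the projection to the `x`-axis of the visibility
polygon of `p`. The shadow is a compact interval, since the visibility polygon is compact and
star-shaped about `p`, and points with disjoint shadows have disjoint visibility polygons. So the
theorem reduces to the duality between piercing points and disjoint members of a family of
intervals. There a greedy sweep works: put a piercing point at the infimum of the right endpoints
and recurse on the intervals beyond it.
-/

section IntervalPiercing

variable {ι α : Type*} [ConditionallyCompleteLinearOrder α] {L R : ι → α}

theorem exists_forall_lt_of_forall_sInf_lt {S : Set ι} {W : Finset ι} (hS : S.Nonempty)
    (hW : ∀ w ∈ W, sInf (R '' S) < L w) : ∃ j ∈ S, ∀ w ∈ W, R j < L w := by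
  rcases W.eq_empty_or_nonempty with rfl | hne
  · exact hS.imp fun j hj ↦ ⟨hj, by simp⟩
  obtain ⟨w, hw, hmin⟩ := W.exists_min_image L hne
  obtain ⟨_, ⟨j, hj, rfl⟩, hlt⟩ := exists_lt_of_csInf_lt (hS.image R) (hW w hw)
  exact ⟨j, hj, fun w' hw' ↦ hlt.trans_le (hmin w' hw')⟩

theorem exists_piercing_card_le_pairwiseDisjoint (hLR : ∀ i, L i ≤ R i) (F : Finset α) (S : Set ι)
    (hF : ∀ i ∈ S, ∃ x ∈ F, x ∈ Icc (L i) (R i)) :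
    ∃ (X : Finset α) (W : Finset ι), (W : Set ι) ⊆ S ∧ X.card ≤ W.card ∧
      (∀ i ∈ S, ∃ x ∈ X, x ∈ Icc (L i) (R i)) ∧
      (W : Set ι).PairwiseDisjoint fun i ↦ Icc (L i) (R i) := by
  classical
  induction F using Finset.induction_on_min generalizing S with
  | empty => exact ⟨∅, ∅, by simp, le_rfl, hF, by simp⟩
  | insert a F haF ih =>
    rcases S.eq_empty_or_nonempty with rfl | hS
    · exact ⟨∅, ∅, by simp⟩
    have haR : ∀ i ∈ S, a ≤ R i := fun i hi ↦ by
      obtain ⟨x, hx, -, hxR⟩ := hF i hi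
      rcases Finset.mem_insert.1 hx with rfl | hx
      · exact hxR
      · exact (haF x hx).le.trans hxR
    set x₀ := sInf (R '' S)
    have hax₀ : a ≤ x₀ := le_csInf (hS.image R) (forall_mem_image.2 haR)
    have hx₀R : ∀ i ∈ S, x₀ ≤ R i := fun i hi ↦
      csInf_le ⟨a, forall_mem_image.2 haR⟩ (mem_image_of_mem R hi)
    obtain ⟨X, W, hWS, hcard, hX, hW⟩ := ih {i ∈ S | x₀ < L i} fun i ⟨hi, hx₀L⟩ ↦ by
      obtain ⟨x, hx, hxi⟩ := hF i hi
      exact ⟨x, Finset.mem_of_mem_insert_of_ne hx ((hax₀.trans_lt hx₀L).trans_le hxi.1).ne', hxi⟩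
    obtain ⟨j, hjS, hjW⟩ : ∃ j ∈ S, ∀ w ∈ W, R j < L w :=
      exists_forall_lt_of_forall_sInf_lt hS fun w hw ↦ (hWS hw).2
    refine ⟨insert x₀ X, insert j W, ?_, ?_, fun i hi ↦ ?_, ?_⟩
    · simpa [insert_subset_iff, hjS] using hWS.trans (sep_subset _ _)
    · rw [Finset.card_insert_of_notMem fun h ↦ (hjW j h).not_ge (hLR j)]
      grw [Finset.card_insert_le, hcard]
    · by_cases hL : L i ≤ x₀
      · exact ⟨x₀, Finset.mem_insert_self _ _, hL, hx₀R i hi⟩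
      · obtain ⟨x, hx, hxi⟩ := hX i ⟨hi, not_le.1 hL⟩
        exact ⟨x, Finset.mem_insert_of_mem hx, hxi⟩
    · rw [Finset.coe_insert]
      exact hW.insert fun w hw _ ↦
        disjoint_left.2 fun _ hj hw' ↦ (hj.2.trans_lt (hjW w hw)).not_ge hw'.1

end IntervalPiercing

section Visibility

variable {P : Set (ℝ × ℝ)} {p q : ℝ × ℝ}

theorem seesIn_comm : seesIn P p q ↔ seesIn P q p := by
  rw [seesIn, seesIn, segment_symm]

theorem mem_visIn_iff : q ∈ visIn P p ↔ seesIn P p q :=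
  and_iff_right_of_imp fun h ↦ h (right_mem_segment ℝ p q)

theorem self_mem_visIn (hp : p ∈ P) : p ∈ visIn P p := by
  simpa [mem_visIn_iff, seesIn] using hp

theorem starConvex_visIn : StarConvex ℝ p (visIn P p) := by
  refine starConvex_iff_segment_subset.2 fun q hq r hr ↦ mem_visIn_iff.2 ?_
  exact ((convex_segment p q).segment_subset (left_mem_segment ℝ p q) hr).trans hq.2

theorem isCompact_visIn (hP : IsCompact P) : IsCompact (visIn P p) := by
  have hvis : visIn P p = P ∩ ⋂ θ ∈ Icc (0 : ℝ) 1, (AffineMap.lineMap p · θ) ⁻¹' P := by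
    ext q
    refine and_congr_right fun _ ↦ ?_
    rw [seesIn, segment_eq_image_lineMap, image_subset_iff]
    simp [subset_def]
  rw [hvis]
  refine hP.inter_right (isClosed_biInter fun θ _ ↦ hP.isClosed.preimage ?_)
  simp only [AffineMap.lineMap_apply_module]
  fun_prop

/-- The abscissas of the points visible from `p` within `P`. -/
def shadow (P : Set (ℝ × ℝ)) (p : ℝ × ℝ) : Set ℝ := Prod.fst '' visIn P p

theorem fst_mem_shadow (h : seesIn P p q) : q.1 ∈ shadow P p :=
  mem_image_of_mem _ (mem_visIn_iff.2 h)

theorem exists_shadow_eq_Icc (hP : IsCompact P) (hp : p ∈ P) :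
    ∃ a b, a ≤ b ∧ shadow P p = Icc a b := by
  have hmem : p.1 ∈ shadow P p := mem_image_of_mem _ (self_mem_visIn hp)
  have hstar : StarConvex ℝ p.1 (shadow P p) :=
    starConvex_visIn.linear_image (LinearMap.fst ℝ ℝ ℝ)
  have hconn : IsConnected (shadow P p) :=
    ⟨⟨_, hmem⟩, (hstar.ordConnected hmem).isPreconnected⟩
  have hIcc := eq_Icc_of_connected_compact hconn ((isCompact_visIn hP).image continuous_fst)
  exact ⟨_, _, nonempty_Icc.1 (hIcc ▸ ⟨_, hmem⟩), hIcc⟩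

end Visibility

section Perfect

variable {P G W : Set (ℝ × ℝ)}

/-- A finite set of guards in `P` that together see all of `P`. -/
def IsGuardCover (P G : Set (ℝ × ℝ)) : Prop :=
  G.Finite ∧ G ⊆ P ∧ P ⊆ ⋃ g ∈ G, visIn P g

/-- A finite set of points of `P` no two of which can be seen by a common guard. -/
def IsWitnessSet (P W : Set (ℝ × ℝ)) : Prop :=
  W.Finite ∧ W ⊆ P ∧ ∀ w ∈ W, ∀ w' ∈ W, w ≠ w' → visIn P w ∩ visIn P w' = ∅

/-- The guarding number of `P` equals its witness number, both being attained. -/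
def IsPerfect (P : Set (ℝ × ℝ)) : Prop :=
  ∃ m : ℕ, IsLeast {k | ∃ G, IsGuardCover P G ∧ G.ncard = k} m ∧
    IsGreatest {k | ∃ W, IsWitnessSet P W ∧ W.ncard = k} m

theorem IsGuardCover.exists_seesIn (hG : IsGuardCover P G) {p : ℝ × ℝ} (hp : p ∈ P) :
    ∃ g ∈ G, seesIn P p g := by
  obtain ⟨g, hg, hpg⟩ := mem_iUnion₂.1 (hG.2.2 hp)
  exact ⟨g, hg, seesIn_comm.1 hpg.2⟩

theorem IsWitnessSet.ncard_le (hW : IsWitnessSet P W) (hG : IsGuardCover P G) :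
    W.ncard ≤ G.ncard := by
  have hguard : ∀ w ∈ W, ∃ g ∈ G, seesIn P w g := fun w hw ↦ hG.exists_seesIn (hW.2.1 hw)
  choose! g hgG hsees using hguard
  refine ncard_le_ncard_of_injOn g hgG (fun w hw w' hw' hgw ↦ ?_) hG.1
  by_contra hne
  have hmem : g w ∈ visIn P w ∩ visIn P w' :=
    ⟨mem_visIn_iff.2 (hsees w hw), mem_visIn_iff.2 (hgw ▸ hsees w' hw')⟩
  simp [hW.2.2 w hw w' hw' hne] at hmem

theorem isPerfect_of_ncard_le (hG : IsGuardCover P G) (hW : IsWitnessSet P W)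
    (hGW : G.ncard ≤ W.ncard) : IsPerfect P := by
  refine ⟨G.ncard, ⟨⟨G, hG, rfl⟩, ?_⟩, ⟨⟨W, hW, (hW.ncard_le hG).antisymm hGW⟩, ?_⟩⟩
  · rintro _ ⟨G', hG', rfl⟩
    exact hGW.trans (hW.ncard_le hG')
  · rintro _ ⟨W', hW', rfl⟩
    exact hW'.ncard_le hG

theorem exists_isGuardCover_iUnion_of_convex {ι : Type*} [Finite ι] {C : ι → Set (ℝ × ℝ)}
    (hC : ∀ i, Convex ℝ (C i)) : ∃ G, IsGuardCover (⋃ i, C i) G := by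
  refine ⟨range fun i : {i // (C i).Nonempty} ↦ i.2.some, finite_range _, ?_, ?_⟩
  · rintro _ ⟨i, rfl⟩
    exact mem_iUnion_of_mem i.1 i.2.some_mem
  · intro p hp
    obtain ⟨i, hpi⟩ := mem_iUnion.1 hp
    have hne : (C i).Nonempty := ⟨p, hpi⟩
    refine mem_iUnion₂_of_mem (mem_range_self ⟨i, hne⟩) (mem_visIn_iff.2 ?_)
    exact ((hC i).segment_subset hne.some_mem hpi).trans (subset_iUnion C i)

theorem isWitnessSet_of_pairwiseDisjoint_shadow (hfin : W.Finite) (hWP : W ⊆ P)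
    (hdisj : W.PairwiseDisjoint (shadow P)) : IsWitnessSet P W :=
  ⟨hfin, hWP, fun _ hw _ hw' hne ↦
    disjoint_iff_inter_eq_empty.1 (hdisj hw hw' hne).of_image⟩

theorem isGuardCover_roof {ℓ : ℝ → ℝ} {X : Set ℝ} (hX : X.Finite)
    (hroof : ∀ p q, seesIn P p q → seesIn P p (q.1, ℓ q.1))
    (hpierce : ∀ p ∈ P, ∃ x ∈ X, x ∈ shadow P p) :
    IsGuardCover P ((fun x ↦ (x, ℓ x)) '' X ∩ P) := by
  refine ⟨(hX.image _).inter_of_left _, inter_subset_right, fun p hp ↦ ?_⟩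
  obtain ⟨_, hqX, q, hq, rfl⟩ := hpierce p hp
  have hsees : seesIn P p (q.1, ℓ q.1) := hroof p q hq.2
  exact mem_iUnion₂_of_mem ⟨mem_image_of_mem _ hqX, (mem_visIn_iff.2 hsees).1⟩
    (mem_visIn_iff.2 (seesIn_comm.1 hsees))

theorem isPerfect_of_roof {ℓ : ℝ → ℝ} (hP : IsCompact P) (hcov : ∃ G, IsGuardCover P G)
    (hroof : ∀ p q, seesIn P p q → seesIn P p (q.1, ℓ q.1)) : IsPerfect P := by
  have hIcc (p : P) := exists_shadow_eq_Icc hP p.2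
  choose L R hLR hshadow using hIcc
  obtain ⟨G, hG⟩ := hcov
  have hpierced (p : P) : ∃ x ∈ hG.1.toFinset.image Prod.fst, x ∈ Icc (L p) (R p) := by
    obtain ⟨g, hg, hpg⟩ := hG.exists_seesIn p.2
    exact ⟨g.1, Finset.mem_image_of_mem _ (hG.1.mem_toFinset.2 hg),
      hshadow p ▸ fst_mem_shadow hpg⟩
  obtain ⟨X, W, -, hcard, hX, hW⟩ :=
    exists_piercing_card_le_pairwiseDisjoint hLR _ univ fun p _ ↦ hpierced p
  have hcover : IsGuardCover P ((fun x ↦ (x, ℓ x)) '' (X : Set ℝ) ∩ P) :=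
    isGuardCover_roof X.finite_toSet hroof fun p hp ↦
      hshadow ⟨p, hp⟩ ▸ hX ⟨p, hp⟩ (mem_univ _)
  have hwitness : IsWitnessSet P (Subtype.val '' (W : Set P)) := by
    refine isWitnessSet_of_pairwiseDisjoint_shadow (W.finite_toSet.image _)
      (Subtype.coe_image_subset P _) ?_
    rintro _ ⟨w, hw, rfl⟩ _ ⟨w', hw', rfl⟩ hne
    simpa only [Function.onFun, hshadow] using hW hw hw' fun h ↦ hne (congrArg _ h)
  refine isPerfect_of_ncard_le hcover hwitness ?_
  calc ((fun x ↦ (x, ℓ x)) '' (X : Set ℝ) ∩ P).ncard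
      ≤ ((fun x ↦ (x, ℓ x)) '' (X : Set ℝ)).ncard :=
        ncard_le_ncard inter_subset_left (X.finite_toSet.image _)
    _ ≤ X.card := (ncard_image_le X.finite_toSet).trans_eq (ncard_coe_finset X)
    _ ≤ W.card := hcard
    _ = (Subtype.val '' (W : Set P)).ncard := by
      rw [ncard_image_of_injective _ Subtype.val_injective, ncard_coe_finset]

end Perfect

section MountainOver

variable {K : Set (ℝ × ℝ)} {s : Set ℝ} {ℓ : ℝ → ℝ} {p q : ℝ × ℝ}

/-- The region swept out by moving the points of `K` vertically upwards as far as the graph of the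
roof `ℓ`. -/
def mountainOver (K : Set (ℝ × ℝ)) (ℓ : ℝ → ℝ) : Set (ℝ × ℝ) :=
  {p | p.2 ≤ ℓ p.1 ∧ ∃ t ∈ K, t.1 = p.1 ∧ t.2 ≤ p.2}

theorem mountainOver_iUnion {ι : Type*} (K : ι → Set (ℝ × ℝ)) (ℓ : ℝ → ℝ) :
    mountainOver (⋃ i, K i) ℓ = ⋃ i, mountainOver (K i) ℓ := by
  ext p
  simp only [mountainOver, mem_iUnion, mem_ofPred_eq]
  tauto

theorem isCompact_mountainOver (hK : IsCompact K) (hKs : MapsTo Prod.fst K s)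
    (hℓ : ContinuousOn ℓ s) : IsCompact (mountainOver K ℓ) := by
  have hℓK : ContinuousOn (fun t : ℝ × ℝ ↦ ℓ t.1) K := hℓ.comp continuousOn_fst hKs
  set K' := {t ∈ K | t.2 ≤ ℓ t.1}
  have hK' : IsCompact K' :=
    hK.of_isClosed_subset (hK.isClosed.isClosed_le continuousOn_snd hℓK) (sep_subset _ _)
  have himage : mountainOver K ℓ =
      (fun z : (ℝ × ℝ) × ℝ ↦ (z.1.1, (1 - z.2) * z.1.2 + z.2 * ℓ z.1.1)) '' (K' ×ˢ Icc 0 1) := by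
    ext ⟨x, y⟩
    constructor
    · rintro ⟨hy, t, htK, rfl : t.1 = x, hty⟩
      have hyseg : y ∈ segment ℝ t.2 (ℓ t.1) := segment_eq_Icc (hty.trans hy) ▸ ⟨hty, hy⟩
      rw [segment_eq_image] at hyseg
      obtain ⟨θ, hθ, rfl⟩ := hyseg
      exact ⟨(t, θ), ⟨⟨htK, hty.trans hy⟩, hθ⟩, rfl⟩
    · rintro ⟨⟨t, θ⟩, ⟨⟨htK, htℓ⟩, hθ⟩, heq⟩
      obtain ⟨rfl, rfl⟩ := Prod.mk.inj heq
      have hmem : (1 - θ) * t.2 + θ * ℓ t.1 ∈ Icc t.2 (ℓ t.1) := by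
        rw [← segment_eq_Icc htℓ, segment_eq_image]
        exact mem_image_of_mem _ hθ
      exact ⟨hmem.2, t, htK, rfl, hmem.1⟩
  rw [himage]
  refine (hK'.prod isCompact_Icc).image_of_continuousOn ?_
  have hℓ' : ContinuousOn (fun z : (ℝ × ℝ) × ℝ ↦ ℓ z.1.1) (K' ×ˢ Icc 0 1) :=
    hℓK.comp continuousOn_fst fun z hz ↦ hz.1.1
  exact .prodMk (by fun_prop) (.add (by fun_prop) (.mul (by fun_prop) hℓ'))

theorem convex_mountainOver (hK : Convex ℝ K) (hKs : MapsTo Prod.fst K s)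
    (hℓ : ConcaveOn ℝ s ℓ) : Convex ℝ (mountainOver K ℓ) := by
  rintro p ⟨hp, t, ht, htp, htp'⟩ q ⟨hq, u, hu, huq, huq'⟩ a b ha hb hab
  refine ⟨?_, a • t + b • u, hK ht hu ha hb hab, by simp [htp, huq], ?_⟩
  · exact (hℓ.convex_hypograph ⟨htp ▸ hKs ht, hp⟩ ⟨huq ▸ hKs hu, hq⟩ ha hb hab).2
  · change a * t.2 + b * u.2 ≤ a * p.2 + b * q.2
    gcongr

theorem seesIn_mountainOver_roof (hKs : MapsTo Prod.fst K s) (hℓ : ConcaveOn ℝ s ℓ)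
    (hpq : seesIn (mountainOver K ℓ) p q) : seesIn (mountainOver K ℓ) p (q.1, ℓ q.1) := by
  obtain ⟨hp, t, ht, htp, -⟩ := hpq (left_mem_segment ℝ p q)
  obtain ⟨hq, u, hu, huq, -⟩ := hpq (right_mem_segment ℝ p q)
  rintro _ ⟨a, b, ha, hb, hab, rfl⟩
  obtain ⟨-, w, hw, hw₁, hw₂⟩ := hpq ⟨a, b, ha, hb, hab, rfl⟩
  refine ⟨?_, w, hw, hw₁, hw₂.trans ?_⟩
  · exact (hℓ.convex_hypograph ⟨htp ▸ hKs ht, hp⟩ ⟨huq ▸ hKs hu, le_rfl⟩ ha hb hab).2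
  · change a * p.2 + b * q.2 ≤ a * p.2 + b * ℓ q.1
    gcongr

theorem isPerfect_mountainOver_iUnion {ι : Type*} [Finite ι] {K : ι → Set (ℝ × ℝ)}
    (hK : ∀ i, IsCompact (K i)) (hKconv : ∀ i, Convex ℝ (K i))
    (hKs : ∀ i, MapsTo Prod.fst (K i) s) (hℓ : ConcaveOn ℝ s ℓ) (hℓc : ContinuousOn ℓ s) :
    IsPerfect (mountainOver (⋃ i, K i) ℓ) := by
  have hUs : MapsTo Prod.fst (⋃ i, K i) s := mapsTo_iUnion.2 hKs
  refine isPerfect_of_roof (isCompact_mountainOver (isCompact_iUnion hK) hUs hℓc) ?_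
    fun p q ↦ seesIn_mountainOver_roof hUs hℓ
  rw [mountainOver_iUnion]
  exact exists_isGuardCover_iUnion_of_convex fun i ↦ convex_mountainOver (hKconv i) (hKs i) hℓ

end MountainOver

section Segment

theorem isCompact_segment {E : Type*} [AddCommGroup E] [Module ℝ E] [TopologicalSpace E]
    [IsTopologicalAddGroup E] [ContinuousSMul ℝ E] (a b : E) : IsCompact (segment ℝ a b) :=
  convexHull_pair (𝕜 := ℝ) a b ▸ (toFinite {a, b}).isCompact_convexHull ℝ

variable {E F : Type*} [AddCommGroup E] [Module ℝ E] [AddCommGroup F] [Module ℝ F]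

theorem image_fst_segment (a b : E × F) : Prod.fst '' segment ℝ a b = segment ℝ a.1 b.1 :=
  image_segment ℝ (LinearMap.fst ℝ E F).toAffineMap a b

theorem injOn_fst_segment {a b : E × F} (hab : a.1 ≠ b.1) : InjOn Prod.fst (segment ℝ a b) := by
  rw [segment_eq_image_lineMap]
  rintro _ ⟨θ, -, rfl⟩ _ ⟨η, -, rfl⟩ h
  rw [AffineMap.fst_lineMap, AffineMap.fst_lineMap] at h
  rw [AffineMap.lineMap_injective ℝ hab h]

theorem fst_mem_Icc_of_mem_segment {a b t : ℝ × F} (hab : a.1 ≤ b.1) (ht : t ∈ segment ℝ a b) :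
    t.1 ∈ Icc a.1 b.1 := by
  rw [← segment_eq_Icc hab, ← image_fst_segment]
  exact mem_image_of_mem _ ht

end Segment

section LowerChain

variable {n : ℕ} {hn : 2 ≤ n} {v : Fin n → ℝ × ℝ}

theorem mem_lowerChain_iff {t : ℝ × ℝ} : t ∈ lowerChain n hn v ↔
    ∃ k, ∃ hk : k + 1 < n, t ∈ segment ℝ (v ⟨k, by omega⟩) (v ⟨k + 1, hk⟩) := by
  rw [lowerChain, mem_iUnion]
  exact ⟨fun ⟨i, hi⟩ ↦ ⟨i, by omega, hi⟩, fun ⟨k, hk, ht⟩ ↦ ⟨⟨k, by omega⟩, ht⟩⟩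

theorem Icc_subset_image_fst_lowerChain (k : ℕ) (hk : k < n) :
    Icc (v ⟨0, by omega⟩).1 (v ⟨k, hk⟩).1 ⊆ Prod.fst '' lowerChain n hn v := by
  induction k with
  | zero =>
    rw [Icc_self, singleton_subset_iff]
    exact mem_image_of_mem _ (mem_lowerChain_iff.2 ⟨0, by omega, left_mem_segment ℝ _ _⟩)
  | succ k ih =>
    refine Icc_subset_Icc_union_Icc.trans (union_subset (ih (by omega)) ?_)
    calc Icc (v ⟨k, by omega⟩).1 (v ⟨k + 1, hk⟩).1
        ⊆ segment ℝ (v ⟨k, by omega⟩).1 (v ⟨k + 1, hk⟩).1 := Icc_subset_segment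
      _ = Prod.fst '' segment ℝ (v ⟨k, by omega⟩) (v ⟨k + 1, hk⟩) := (image_fst_segment _ _).symm
      _ ⊆ Prod.fst '' lowerChain n hn v :=
        image_mono fun t ht ↦ mem_lowerChain_iff.2 ⟨k, hk, ht⟩

theorem mapsTo_fst_lowerChain (hv : Monotone fun i ↦ (v i).1) :
    MapsTo Prod.fst (lowerChain n hn v)
      (Icc (v ⟨0, by omega⟩).1 (v ⟨n - 1, by omega⟩).1) := by
  intro t ht
  obtain ⟨k, hk, ht⟩ := mem_lowerChain_iff.1 ht
  refine Icc_subset_Icc (hv ?_) (hv ?_) (fst_mem_Icc_of_mem_segment (hv ?_) ht) <;>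
    simp only [Fin.mk_le_mk] <;> omega

theorem injOn_fst_lowerChain (hv : StrictMono fun i ↦ (v i).1) :
    InjOn Prod.fst (lowerChain n hn v) := by
  intro t ht u hu htu
  obtain ⟨j, hj, htj⟩ := mem_lowerChain_iff.1 ht
  obtain ⟨k, hk, huk⟩ := mem_lowerChain_iff.1 hu
  wlog hjk : j ≤ k generalizing t u j k
  · exact (this hu ht htu.symm k hk huk j hj htj (by omega)).symm
  have hlt (i : ℕ) (hi : i + 1 < n) : (v ⟨i, by omega⟩).1 < (v ⟨i + 1, hi⟩).1 :=
    hv (Fin.mk_lt_mk.2 i.lt_succ_self)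
  rcases hjk.eq_or_lt with rfl | hjk
  · exact injOn_fst_segment (hlt j hj).ne htj huk htu
  -- `t` lies over the left edge and `u` over the right one, so both are the vertex they share.
  have hshared : (v ⟨j + 1, hj⟩).1 ≤ (v ⟨k, by omega⟩).1 := hv.monotone (Fin.mk_le_mk.2 hjk)
  have ht₁ := fst_mem_Icc_of_mem_segment (hlt j hj).le htj
  have hu₁ := fst_mem_Icc_of_mem_segment (hlt k hk).le huk
  calc t = v ⟨j + 1, hj⟩ :=
        injOn_fst_segment (hlt j hj).ne htj (right_mem_segment ℝ _ _) (by linarith [ht₁.2, hu₁.1])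
    _ = v ⟨k, by omega⟩ := congrArg v (hv.injective (by linarith [ht₁.2, hu₁.1]))
    _ = u :=
        injOn_fst_segment (hlt k hk).ne (left_mem_segment ℝ _ _) huk (by linarith [ht₁.2, hu₁.1])

theorem monoMountain_eq_mountainOver (hv : StrictMono fun i ↦ (v i).1) (ℓ : ℝ → ℝ) :
    monoMountain n hn v ℓ = mountainOver (lowerChain n hn v) ℓ := by
  ext p
  constructor
  · rintro ⟨h₀, h₁, hp, habove⟩
    obtain ⟨t, ht, htp⟩ := Icc_subset_image_fst_lowerChain (n - 1) (by omega) ⟨h₀, h₁⟩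
    exact ⟨hp, t, ht, htp, habove t ht htp⟩
  · rintro ⟨hp, t, ht, htp, htp'⟩
    have hmem := htp ▸ mapsTo_fst_lowerChain hv.monotone ht
    refine ⟨hmem.1, hmem.2, hp, fun u hu hup ↦ ?_⟩
    rwa [injOn_fst_lowerChain hv hu ht (hup.trans htp.symm)]

end LowerChain

theorem stmt_14_general (n : ℕ) (hn : 2 ≤ n) (v : Fin n → ℝ × ℝ)
    (hv : StrictMono fun i ↦ (v i).1) (ℓ : ℝ → ℝ)
    (hℓ : ConcaveOn ℝ (Icc (v ⟨0, by omega⟩).1 (v ⟨n - 1, by omega⟩).1) ℓ)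
    (hℓc : ContinuousOn ℓ (Icc (v ⟨0, by omega⟩).1 (v ⟨n - 1, by omega⟩).1)) :
    IsPerfect (monoMountain n hn v ℓ) := by
  rw [monoMountain_eq_mountainOver hv]
  exact isPerfect_mountainOver_iUnion (fun _ ↦ isCompact_segment _ _) (fun _ ↦ convex_segment _ _)
    (mapsTo_iUnion.1 (mapsTo_fst_lowerChain (hn := hn) hv.monotone)) hℓ hℓc

theorem stmt_14 (n : ℕ) (hn : 2 ≤ n) (v : Fin n → ℝ × ℝ)
    (hmono : ∀ i j : Fin n, i < j → (v i).1 < (v j).1)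
    (ℓ : ℝ → ℝ) (haff : ∃ a b : ℝ, ∀ x : ℝ, ℓ x = a * x + b)
    (hℓ0 : ℓ (v ⟨0, by omega⟩).1 = (v ⟨0, by omega⟩).2)
    (hℓlast : ℓ (v ⟨n - 1, by omega⟩).1 = (v ⟨n - 1, by omega⟩).2)
    (hbelow : ∀ i : Fin n, (v i).2 ≤ ℓ (v i).1) :
    ∃ m : ℕ,
      IsLeast {k : ℕ | ∃ G : Set (ℝ × ℝ), G.Finite ∧ G ⊆ monoMountain n hn v ℓ ∧
        monoMountain n hn v ℓ ⊆ (⋃ g ∈ G, visIn (monoMountain n hn v ℓ) g) ∧ G.ncard = k} m ∧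
      IsGreatest {k : ℕ | ∃ W : Set (ℝ × ℝ), W.Finite ∧ W ⊆ monoMountain n hn v ℓ ∧
        (∀ w ∈ W, ∀ w' ∈ W, w ≠ w' →
          visIn (monoMountain n hn v ℓ) w ∩ visIn (monoMountain n hn v ℓ) w' = ∅) ∧
        W.ncard = k} m := by
  obtain ⟨a, b, hab⟩ := haff
  obtain rfl : ℓ = fun x ↦ a * x + b := funext hab
  simpa only [IsPerfect, IsGuardCover, IsWitnessSet, and_assoc] using
    stmt_14_general n hn v (fun i j hij ↦ hmono i j hij) (fun x ↦ a * x + b)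
      (((LinearMap.mulLeft ℝ a).concaveOn (convex_Icc _ _)).add_const b) (by fun_prop)
end
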